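/- Assume ∫ₐᵇ w ≠ 0 and set δ := 2 + 2‖w‖_{L¹}/|∫ₐᵇ w|. Let λ ∈ ℂ with Im λ ≠ 0 and let (φ, u) be a solution of −(pφ')' + qφ = λwφ on [a,b] satisfying separated self-adjoint boundary conditions u(a) = l·φ(a), u(b) = r·φ(b) with l, r ∈ ℝ. Then ‖φ'‖_{p,2} ≤ α·δ·‖φ‖_{1/p,2} and ‖φ‖_∞ ≤ √α·δ·‖φ‖_{1/p,2}, where α := |l| + |r| + ‖q₋‖_{L¹}. -/

import Mathlib

open MeasureTheory Real Complex

/-!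
Multiply the equation by `conj φ` and integrate by parts. Since the boundary conditions are
self-adjoint, the imaginary part of the resulting identity reads `Im lam * ∫ w |φ|² = 0`, so `φ` is
neutral: `∫ w |φ|² = 0`. The real part then bounds the energy `∫ |u|² / p` by `α ‖φ‖_∞²`.

Neutrality also gives `|φ(x)|² ∫ w = ∫ w (|φ(x)|² - |φ|²)`, which is at most `‖w‖₁` times the
oscillation of `|φ|²`. That oscillation is at most `2 ∫ |φ| |φ'|`, hence, by Cauchy–Schwarz, at most
`2 ‖φ‖_{1/p,2} ‖φ'‖_{p,2}`. So `‖φ‖_∞²` is bounded by `δ ‖φ‖_{1/p,2} ‖φ'‖_{p,2}`, and inserting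
the energy bound into this estimate, and conversely, yields both inequalities.
-/

open scoped ComplexConjugate

section Primitive

variable {E E' : Type*} [NormedAddCommGroup E] [NormedSpace ℝ E]
  [NormedAddCommGroup E'] [NormedSpace ℝ E']

/-- `F` is absolutely continuous on the interval between `a` and `b` with a.e. derivative `f`,
encoded as an indefinite integral of the integrable function `f`. -/
structure IsPrimitiveOn (F f : ℝ → E) (a b : ℝ) : Prop where
  intervalIntegrable : IntervalIntegrable f volume a b
  eq_add_integral : ∀ x ∈ Set.uIcc a b, F x = F a + ∫ t in a..x, f t

theorem absolutelyContinuousOnInterval_of_dist_le {X Y : Type*} [PseudoMetricSpace X]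
    [PseudoMetricSpace Y] {F : ℝ → X} {G : ℝ → Y} {a b : ℝ}
    (hG : AbsolutelyContinuousOnInterval G a b)
    (h : ∀ x ∈ Set.uIcc a b, ∀ y ∈ Set.uIcc a b, dist (F x) (F y) ≤ dist (G x) (G y)) :
    AbsolutelyContinuousOnInterval F a b := by
  rw [absolutelyContinuousOnInterval_iff] at hG ⊢
  intro ε hε
  obtain ⟨η, hη, hGη⟩ := hG ε hε
  refine ⟨η, hη, fun I hI hIη => (Finset.sum_le_sum fun i hi => ?_).trans_lt (hGη I hI hIη)⟩
  exact h _ (hI.1 i hi).1 _ (hI.1 i hi).2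

namespace IsPrimitiveOn

variable {F f : ℝ → E} {a b x y : ℝ}

theorem intervalIntegrable_of_mem (hF : IsPrimitiveOn F f a b) (hx : x ∈ Set.uIcc a b)
    (hy : y ∈ Set.uIcc a b) : IntervalIntegrable f volume x y :=
  hF.intervalIntegrable.mono_set (Set.uIcc_subset_uIcc hx hy)

theorem integral_eq_sub (hF : IsPrimitiveOn F f a b) (hx : x ∈ Set.uIcc a b)
    (hy : y ∈ Set.uIcc a b) : ∫ t in x..y, f t = F y - F x := by
  have ha : a ∈ Set.uIcc a b := Set.left_mem_uIcc
  rw [hF.eq_add_integral x hx, hF.eq_add_integral y hy, add_sub_add_left_eq_sub,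
    intervalIntegral.integral_interval_sub_left (hF.intervalIntegrable_of_mem ha hy)
      (hF.intervalIntegrable_of_mem ha hx)]

theorem absolutelyContinuousOnInterval (hF : IsPrimitiveOn F f a b) :
    AbsolutelyContinuousOnInterval F a b := by
  have ha : a ∈ Set.uIcc a b := Set.left_mem_uIcc
  refine absolutelyContinuousOnInterval_of_dist_le
    (hF.intervalIntegrable.norm.absolutelyContinuousOnInterval_intervalIntegral ha)
    fun x hx y hy => ?_
  rw [dist_eq_norm, dist_eq_norm, ← hF.integral_eq_sub hy hx,
    intervalIntegral.integral_interval_sub_left (hF.intervalIntegrable_of_mem ha hx).norm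
      (hF.intervalIntegrable_of_mem ha hy).norm]
  exact intervalIntegral.norm_integral_le_abs_integral_norm

theorem continuousOn (hF : IsPrimitiveOn F f a b) : ContinuousOn F (Set.uIcc a b) :=
  hF.absolutelyContinuousOnInterval.continuousOn

theorem ae_hasDerivAt [CompleteSpace E] (hF : IsPrimitiveOn F f a b) :
    ∀ᵐ x, x ∈ Set.uIcc a b → HasDerivAt F (f x) x := by
  have hmin : ∀ᵐ x : ℝ, x ≠ min a b := by simp [ae_iff]
  have hmax : ∀ᵐ x : ℝ, x ≠ max a b := by simp [ae_iff]
  filter_upwards [hF.intervalIntegrable.ae_hasDerivAt_integral, hmin, hmax]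
    with x hderiv hxmin hxmax hx
  have hnhds : Set.uIcc a b ∈ nhds x :=
    Icc_mem_nhds (hx.1.lt_of_ne' hxmin) (hx.2.lt_of_ne hxmax)
  exact ((hderiv hx a Set.left_mem_uIcc).const_add (F a)).congr_of_eventuallyEq
    (Filter.eventually_of_mem hnhds hF.eq_add_integral)

theorem of_ae_hasDerivAt [CompleteSpace E] (hF : AbsolutelyContinuousOnInterval F a b)
    (hf : IntervalIntegrable f volume a b)
    (hderiv : ∀ᵐ x, x ∈ Set.uIcc a b → HasDerivAt F (f x) x) : IsPrimitiveOn F f a b := by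
  have hint : IsPrimitiveOn (fun x => ∫ t in a..x, f t) f a b := ⟨hf, fun x _ => by simp⟩
  have hzero : ∀ᵐ x, x ∈ Set.uIcc a b → HasDerivAt (fun x => F x - ∫ t in a..x, f t) 0 x := by
    filter_upwards [hderiv, hint.ae_hasDerivAt] with x hFx hfx hx
    simpa only [sub_self] using (hFx hx).fun_sub (hfx hx)
  obtain ⟨C, hC⟩ :=
    (hF.fun_sub hint.absolutelyContinuousOnInterval).const_of_ae_hasDerivAt_zero hzero
  refine ⟨hf, fun x hx => ?_⟩
  have hFa : F a = C := by simpa using hC a Set.left_mem_uIcc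
  rw [hFa, ← hC x hx, sub_add_cancel]

theorem clm_comp [CompleteSpace E] [CompleteSpace E'] (hF : IsPrimitiveOn F f a b)
    (L : E →L[ℝ] E') : IsPrimitiveOn (fun x => L (F x)) (fun x => L (f x)) a b where
  intervalIntegrable := ⟨L.integrable_comp hF.intervalIntegrable.1,
    L.integrable_comp hF.intervalIntegrable.2⟩
  eq_add_integral x hx := by
    rw [L.intervalIntegral_comp_comm (hF.intervalIntegrable_of_mem Set.left_mem_uIcc hx),
      hF.eq_add_integral x hx, map_add]

theorem star [CompleteSpace E] [StarAddMonoid E] [NormedStarGroup E] [StarModule ℝ E]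
    (hF : IsPrimitiveOn F f a b) : IsPrimitiveOn (fun x => star (F x)) (fun x => star (f x)) a b :=
  hF.clm_comp (starL' ℝ : E ≃L[ℝ] E).toContinuousLinearMap

theorem mul {A : Type*} [NormedRing A] [NormMulClass A] [NormedAlgebra ℝ A] [CompleteSpace A]
    {F f G g : ℝ → A} (hF : IsPrimitiveOn F f a b) (hG : IsPrimitiveOn G g a b) :
    IsPrimitiveOn (fun x => F x * G x) (fun x => f x * G x + F x * g x) a b := by
  refine of_ae_hasDerivAt
    (hF.absolutelyContinuousOnInterval.fun_smul hG.absolutelyContinuousOnInterval)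
    ((hF.intervalIntegrable.mul_continuousOn hG.continuousOn).add
      (hG.intervalIntegrable.continuousOn_mul hF.continuousOn)) ?_
  filter_upwards [hF.ae_hasDerivAt, hG.ae_hasDerivAt] with x hFx hGx hx
  exact (hFx hx).mul (hGx hx)

section RCLike

variable {𝕜 : Type*} [RCLike 𝕜] {F f : ℝ → 𝕜}

theorem abs_sq_norm_sub_le (hF : IsPrimitiveOn F f a b) (hab : a ≤ b) (hx : x ∈ Set.Icc a b)
    (hy : y ∈ Set.Icc a b) :
    |‖F y‖ ^ 2 - ‖F x‖ ^ 2| ≤ 2 * ∫ t in a..b, ‖F t‖ * ‖f t‖ := by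
  rw [← Set.uIcc_of_le hab] at hx hy
  have hsq : IsPrimitiveOn (fun t => conj (F t) * F t)
      (fun t => conj (f t) * F t + conj (F t) * f t) a b := hF.star.mul hF
  have hint : IntervalIntegrable (fun t => 2 * (‖F t‖ * ‖f t‖)) volume a b :=
    (hF.intervalIntegrable.norm.continuousOn_mul hF.continuousOn.norm).const_mul 2
  have hbound (t : ℝ) : ‖conj (f t) * F t + conj (F t) * f t‖ ≤ 2 * (‖F t‖ * ‖f t‖) := by
    refine (norm_add_le _ _).trans_eq ?_
    rw [norm_mul, norm_mul, RCLike.norm_conj, RCLike.norm_conj]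
    ring
  calc |‖F y‖ ^ 2 - ‖F x‖ ^ 2|
      = ‖∫ t in x..y, (conj (f t) * F t + conj (F t) * f t)‖ := by
        rw [hsq.integral_eq_sub hx hy, RCLike.conj_mul, RCLike.conj_mul]
        norm_cast
    _ ≤ |∫ t in x..y, 2 * (‖F t‖ * ‖f t‖)| :=
        intervalIntegral.norm_integral_le_abs_of_norm_le (.of_forall hbound)
          (hint.mono_set (Set.uIcc_subset_uIcc hx hy))
    _ ≤ |∫ t in a..b, 2 * (‖F t‖ * ‖f t‖)| :=
        intervalIntegral.abs_integral_mono_interval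
          (Set.uIoc_subset_uIoc_of_uIcc_subset_uIcc (Set.uIcc_subset_uIcc hx hy))
          (.of_forall fun t => by positivity) hint
    _ = 2 * ∫ t in a..b, ‖F t‖ * ‖f t‖ := by
        rw [intervalIntegral.integral_const_mul, abs_of_nonneg]
        exact mul_nonneg zero_le_two
          (intervalIntegral.integral_nonneg hab fun t _ => by positivity)

end RCLike

end IsPrimitiveOn

end Primitive

section WeightedInequalities

variable {X : Type*} [MeasurableSpace X] {μ : Measure X}

theorem abs_mul_abs_integral_le_of_integral_mul_eq_zero {w f : X → ℝ} {c C : ℝ}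
    (hw : Integrable w μ) (hwf : Integrable (fun t => w t * f t) μ)
    (horth : ∫ t, w t * f t ∂μ = 0) (hC : ∀ᵐ t ∂μ, |c - f t| ≤ C) :
    |c| * |∫ t, w t ∂μ| ≤ C * ∫ t, |w t| ∂μ := by
  have hsub : c * ∫ t, w t ∂μ = ∫ t, w t * (c - f t) ∂μ := by
    simp_rw [mul_sub]
    rw [integral_sub (hw.mul_const c) hwf, horth, sub_zero, integral_mul_const, mul_comm]
  rw [← abs_mul, hsub, ← integral_const_mul, ← Real.norm_eq_abs]
  refine norm_integral_le_of_norm_le (hw.abs.const_mul C) (hC.mono fun t ht => ?_)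
  rw [norm_mul, Real.norm_eq_abs, Real.norm_eq_abs, mul_comm]
  gcongr

theorem integral_mul_mul_norm_le_sqrt_mul_sqrt {E : Type*} [NormedAddCommGroup E] {k : X → ℝ}
    {f g : X → E} (hk : 0 ≤ᵐ[μ] k) (hkm : AEStronglyMeasurable k μ)
    (hfm : AEStronglyMeasurable f μ) (hgm : AEStronglyMeasurable g μ)
    (hf : Integrable (fun t => k t * ‖f t‖ ^ 2) μ) (hg : Integrable (fun t => k t * ‖g t‖ ^ 2) μ) :
    ∫ t, k t * (‖f t‖ * ‖g t‖) ∂μ ≤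
      √(∫ t, k t * ‖f t‖ ^ 2 ∂μ) * √(∫ t, k t * ‖g t‖ ^ 2 ∂μ) := by
  have hsq (h : X → E) : (fun t => (√(k t) * ‖h t‖) ^ 2) =ᵐ[μ] fun t => k t * ‖h t‖ ^ 2 := by
    filter_upwards [hk] with t ht
    rw [mul_pow, Real.sq_sqrt ht]
  have hmem {h : X → E} (hm : AEStronglyMeasurable h μ)
      (hi : Integrable (fun t => k t * ‖h t‖ ^ 2) μ) : MemLp (fun t => √(k t) * ‖h t‖) 2 μ :=
    (memLp_two_iff_integrable_sq
      ((Real.continuous_sqrt.comp_aestronglyMeasurable hkm).mul hm.norm)).2 (hi.congr (hsq h).symm)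
  calc ∫ t, k t * (‖f t‖ * ‖g t‖) ∂μ
      = ∫ t, (√(k t) * ‖f t‖) * (√(k t) * ‖g t‖) ∂μ := by
        refine integral_congr_ae (hk.mono fun t ht => ?_)
        simp only
        rw [mul_mul_mul_comm, Real.mul_self_sqrt ht]
    _ ≤ (∫ t, (√(k t) * ‖f t‖) ^ (2 : ℝ) ∂μ) ^ (1 / 2 : ℝ) *
          (∫ t, (√(k t) * ‖g t‖) ^ (2 : ℝ) ∂μ) ^ (1 / 2 : ℝ) :=
        integral_mul_le_Lp_mul_Lq_of_nonneg Real.HolderConjugate.two_two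
          (.of_forall fun t => by positivity) (.of_forall fun t => by positivity)
          (by simpa using hmem hfm hf) (by simpa using hmem hgm hg)
    _ = √(∫ t, k t * ‖f t‖ ^ 2 ∂μ) * √(∫ t, k t * ‖g t‖ ^ 2 ∂μ) := by
        simp_rw [Real.rpow_two, ← Real.sqrt_eq_rpow]
        rw [integral_congr_ae (hsq f), integral_congr_ae (hsq g)]

end WeightedInequalities

section SturmLiouville

theorem intervalIntegrable_ofReal {f : ℝ → ℝ} {μ : Measure ℝ} {a b : ℝ}
    (hf : IntervalIntegrable f μ a b) : IntervalIntegrable (fun t => (f t : ℂ)) μ a b :=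
  ⟨hf.1.ofReal, hf.2.ofReal⟩

/-- `(φ, u)` solves `-(φ'/k)' + q φ = lam w φ` on the interval between `a` and `b`, where
`u = φ'/k` is the quasi-derivative. The datum is `k = 1/p` rather than `p`, so that `k` is free to
vanish. -/
structure IsSturmLiouvilleSolution (k q w : ℝ → ℝ) (lam : ℂ) (φ u : ℝ → ℂ) (a b : ℝ) : Prop where
  isPrimitiveOn : IsPrimitiveOn φ (fun t => k t * u t) a b
  isPrimitiveOn_quasiDeriv : IsPrimitiveOn u (fun t => (q t - lam * w t) * φ t) a b

namespace IsSturmLiouvilleSolution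

variable {k q w : ℝ → ℝ} {lam : ℂ} {φ u : ℝ → ℂ} {a b l r : ℝ}

theorem green_identity (h : IsSturmLiouvilleSolution k q w lam φ u a b)
    (hk : IntervalIntegrable k volume a b) (hq : IntervalIntegrable q volume a b)
    (hw : IntervalIntegrable w volume a b) :
    ((∫ t in a..b, k t * ‖u t‖ ^ 2 : ℝ) : ℂ) + (∫ t in a..b, q t * ‖φ t‖ ^ 2 : ℝ) -
      lam * (∫ t in a..b, w t * ‖φ t‖ ^ 2 : ℝ) = conj (φ b) * u b - conj (φ a) * u a := by
  have hφ2 := h.isPrimitiveOn.continuousOn.norm.pow 2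
  have hu2 := h.isPrimitiveOn_quasiDeriv.continuousOn.norm.pow 2
  have hprod : IsPrimitiveOn (fun t => conj (φ t) * u t)
      (fun t => conj (k t * u t) * u t + conj (φ t) * ((q t - lam * w t) * φ t)) a b :=
    h.isPrimitiveOn.star.mul h.isPrimitiveOn_quasiDeriv
  have hderiv (t : ℝ) : conj (k t * u t) * u t + conj (φ t) * ((q t - lam * w t) * φ t) =
      ((k t * ‖u t‖ ^ 2 : ℝ) : ℂ) + (q t * ‖φ t‖ ^ 2 : ℝ) - lam * (w t * ‖φ t‖ ^ 2 : ℝ) := by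
    push_cast [← Complex.conj_mul', map_mul, Complex.conj_ofReal]
    ring
  rw [← hprod.integral_eq_sub Set.left_mem_uIcc Set.right_mem_uIcc]
  simp_rw [hderiv]
  rw [intervalIntegral.integral_sub, intervalIntegral.integral_add,
    intervalIntegral.integral_const_mul]
  · simp only [intervalIntegral.integral_ofReal]
  · exact intervalIntegrable_ofReal (hk.mul_continuousOn hu2)
  · exact intervalIntegrable_ofReal (hq.mul_continuousOn hφ2)
  · exact (intervalIntegrable_ofReal (hk.mul_continuousOn hu2)).add
      (intervalIntegrable_ofReal (hq.mul_continuousOn hφ2))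
  · exact (intervalIntegrable_ofReal (hw.mul_continuousOn hφ2)).const_mul lam

theorem green_identity_of_separated (h : IsSturmLiouvilleSolution k q w lam φ u a b)
    (hk : IntervalIntegrable k volume a b) (hq : IntervalIntegrable q volume a b)
    (hw : IntervalIntegrable w volume a b) (hua : u a = l * φ a) (hub : u b = r * φ b) :
    ((∫ t in a..b, k t * ‖u t‖ ^ 2 : ℝ) : ℂ) + (∫ t in a..b, q t * ‖φ t‖ ^ 2 : ℝ) -
      lam * (∫ t in a..b, w t * ‖φ t‖ ^ 2 : ℝ) = (r * ‖φ b‖ ^ 2 - l * ‖φ a‖ ^ 2 : ℝ) := by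
  rw [h.green_identity hk hq hw, hua, hub]
  push_cast [← Complex.conj_mul']
  ring

theorem integral_weight_mul_sq_norm_eq_zero (h : IsSturmLiouvilleSolution k q w lam φ u a b)
    (hk : IntervalIntegrable k volume a b) (hq : IntervalIntegrable q volume a b)
    (hw : IntervalIntegrable w volume a b) (hua : u a = l * φ a) (hub : u b = r * φ b)
    (hlam : lam.im ≠ 0) : ∫ t in a..b, w t * ‖φ t‖ ^ 2 = 0 := by
  have him := congrArg Complex.im (h.green_identity_of_separated hk hq hw hua hub)
  simpa only [Complex.sub_im, Complex.add_im, Complex.ofReal_im, Complex.im_mul_ofReal, add_zero,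
    zero_sub, neg_eq_zero, mul_eq_zero, hlam, false_or] using him

theorem energy_identity (h : IsSturmLiouvilleSolution k q w lam φ u a b)
    (hk : IntervalIntegrable k volume a b) (hq : IntervalIntegrable q volume a b)
    (hw : IntervalIntegrable w volume a b) (hua : u a = l * φ a) (hub : u b = r * φ b)
    (hneutral : ∫ t in a..b, w t * ‖φ t‖ ^ 2 = 0) :
    ∫ t in a..b, k t * ‖u t‖ ^ 2 =
      r * ‖φ b‖ ^ 2 - l * ‖φ a‖ ^ 2 - ∫ t in a..b, q t * ‖φ t‖ ^ 2 := by
  have hgreen := h.green_identity_of_separated hk hq hw hua hub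
  rw [hneutral, ofReal_zero, mul_zero, sub_zero] at hgreen
  exact eq_sub_of_add_eq (mod_cast hgreen)

theorem energy_le_mul_sq (h : IsSturmLiouvilleSolution k q w lam φ u a b) (hab : a ≤ b)
    (hk : IntervalIntegrable k volume a b) (hq : IntervalIntegrable q volume a b)
    (hw : IntervalIntegrable w volume a b) (hua : u a = l * φ a) (hub : u b = r * φ b)
    (hneutral : ∫ t in a..b, w t * ‖φ t‖ ^ 2 = 0) {M : ℝ}
    (hM : ∀ x ∈ Set.Icc a b, ‖φ x‖ ≤ M) :
    ∫ t in a..b, k t * ‖u t‖ ^ 2 ≤ (l⁻ + r⁺ + ∫ t in a..b, (q t)⁻) * M ^ 2 := by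
  have hsq (x : ℝ) (hx : x ∈ Set.Icc a b) : ‖φ x‖ ^ 2 ≤ M ^ 2 := by
    gcongr
    exact hM x hx
  have hbound {c d : ℝ} (hcd : c ≤ d) (hd : 0 ≤ d) {x : ℝ} (hx : x ∈ Set.Icc a b) :
      c * ‖φ x‖ ^ 2 ≤ d * M ^ 2 :=
    mul_le_mul hcd (hsq x hx) (by positivity) hd
  have hqneg : IntervalIntegrable (fun t => (q t)⁻) volume a b :=
    ⟨hq.1.neg_part, hq.2.neg_part⟩
  have hpotential : ∫ t in a..b, -q t * ‖φ t‖ ^ 2 ≤ (∫ t in a..b, (q t)⁻) * M ^ 2 := by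
    rw [← intervalIntegral.integral_mul_const]
    exact intervalIntegral.integral_mono_on hab
      (hq.neg.mul_continuousOn (h.isPrimitiveOn.continuousOn.norm.pow 2)) (hqneg.mul_const _)
      fun t ht => hbound (neg_le_negPart _) (negPart_nonneg _) ht
  have hleft := hbound (neg_le_negPart l) (negPart_nonneg l) (Set.left_mem_Icc.2 hab)
  have hright := hbound (le_posPart r) (posPart_nonneg r) (Set.right_mem_Icc.2 hab)
  simp only [neg_mul, intervalIntegral.integral_neg] at hpotential hleft
  rw [h.energy_identity hk hq hw hua hub hneutral]
  linarith

theorem sq_norm_mul_abs_integral_weight_le (h : IsSturmLiouvilleSolution k q w lam φ u a b)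
    (hab : a ≤ b) (hw : IntervalIntegrable w volume a b)
    (hneutral : ∫ t in a..b, w t * ‖φ t‖ ^ 2 = 0) {x : ℝ} (hx : x ∈ Set.Icc a b) :
    ‖φ x‖ ^ 2 * |∫ t in a..b, w t| ≤
      (2 * ∫ t in a..b, ‖φ t‖ * ‖k t * u t‖) * ∫ t in a..b, |w t| := by
  have hwφ := hw.mul_continuousOn (h.isPrimitiveOn.continuousOn.norm.pow 2)
  have hosc (t : ℝ) (ht : t ∈ Set.Ioc a b) :=
    h.isPrimitiveOn.abs_sq_norm_sub_le hab (Set.Ioc_subset_Icc_self ht) hx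
  rw [← abs_of_nonneg (sq_nonneg ‖φ x‖)]
  simp only [intervalIntegral.integral_of_le hab] at hneutral hosc ⊢
  exact abs_mul_abs_integral_le_of_integral_mul_eq_zero hw.1 hwφ.1 hneutral
    (ae_restrict_of_forall_mem measurableSet_Ioc hosc)

theorem integral_norm_mul_norm_deriv_le (h : IsSturmLiouvilleSolution k q w lam φ u a b)
    (hab : a ≤ b) (hk : IntervalIntegrable k volume a b)
    (hk_nonneg : ∀ᵐ t ∂volume.restrict (Set.Ioc a b), 0 ≤ k t) :
    ∫ t in a..b, ‖φ t‖ * ‖k t * u t‖ ≤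
      √(∫ t in a..b, k t * ‖φ t‖ ^ 2) * √(∫ t in a..b, k t * ‖u t‖ ^ 2) := by
  have hφ := h.isPrimitiveOn.continuousOn
  have hu := h.isPrimitiveOn_quasiDeriv.continuousOn
  have hIoc : Set.Ioc a b ⊆ Set.uIcc a b := Set.Ioc_subset_Icc_self.trans Set.Icc_subset_uIcc
  have hfactor : ∀ᵐ t ∂volume.restrict (Set.Ioc a b),
      ‖φ t‖ * ‖k t * u t‖ = k t * (‖φ t‖ * ‖u t‖) := by
    filter_upwards [hk_nonneg] with t ht
    rw [norm_mul, Complex.norm_of_nonneg ht, mul_left_comm]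
  simp only [intervalIntegral.integral_of_le hab]
  rw [integral_congr_ae hfactor]
  exact integral_mul_mul_norm_le_sqrt_mul_sqrt hk_nonneg hk.1.aestronglyMeasurable
    ((hφ.mono hIoc).aestronglyMeasurable measurableSet_Ioc)
    ((hu.mono hIoc).aestronglyMeasurable measurableSet_Ioc)
    (hk.mul_continuousOn (hφ.norm.pow 2)).1 (hk.mul_continuousOn (hu.norm.pow 2)).1

end IsSturmLiouvilleSolution

theorem isSturmLiouvilleSolution_of_eq_add_integral {k q w : ℝ → ℝ} {lam : ℂ} {φ u : ℝ → ℂ}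
    {a b : ℝ} (hk : IntervalIntegrable k volume a b) (hq : IntervalIntegrable q volume a b)
    (hw : IntervalIntegrable w volume a b) (hφc : ContinuousOn φ (Set.uIcc a b))
    (huc : ContinuousOn u (Set.uIcc a b))
    (hφ : ∀ x ∈ Set.uIcc a b, φ x = φ a + ∫ t in a..x, k t * u t)
    (hu : ∀ x ∈ Set.uIcc a b, u x = u a + ∫ t in a..x, (q t - lam * w t) * φ t) :
    IsSturmLiouvilleSolution k q w lam φ u a b where
  isPrimitiveOn := ⟨(intervalIntegrable_ofReal hk).mul_continuousOn huc, hφ⟩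
  isPrimitiveOn_quasiDeriv :=
    ⟨((intervalIntegrable_ofReal hq).sub
      ((intervalIntegrable_ofReal hw).const_mul lam)).mul_continuousOn hφc, hu⟩

theorem eigenfunction_norm_estimates_delta_separated_general {k q w : ℝ → ℝ} {lam : ℂ}
    {φ u : ℝ → ℂ} {a b l r α δ : ℝ} (hab : a ≤ b)
    (hk_nonneg : ∀ᵐ t ∂volume.restrict (Set.Ioc a b), 0 ≤ k t)
    (hk : IntervalIntegrable k volume a b) (hq : IntervalIntegrable q volume a b)
    (hw : IntervalIntegrable w volume a b) (hw_ne : ∫ t in a..b, w t ≠ 0)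
    (h : IsSturmLiouvilleSolution k q w lam φ u a b)
    (hua : u a = l * φ a) (hub : u b = r * φ b)
    (hneutral : ∫ t in a..b, w t * ‖φ t‖ ^ 2 = 0)
    (hα : l⁻ + r⁺ + ∫ t in a..b, (q t)⁻ ≤ α)
    (hδ : 2 * (∫ t in a..b, |w t|) / |∫ t in a..b, w t| ≤ δ) :
    √(∫ t in a..b, k t * ‖u t‖ ^ 2) ≤ α * δ * √(∫ t in a..b, k t * ‖φ t‖ ^ 2) ∧
      ∀ x ∈ Set.Icc a b, ‖φ x‖ ≤ √α * δ * √(∫ t in a..b, k t * ‖φ t‖ ^ 2) := by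
  set D := √(∫ t in a..b, k t * ‖u t‖ ^ 2)
  set N := √(∫ t in a..b, k t * ‖φ t‖ ^ 2)
  have hw_pos : 0 < |∫ t in a..b, w t| := abs_pos.2 hw_ne
  have hwabs_nonneg : 0 ≤ ∫ t in a..b, |w t| :=
    intervalIntegral.integral_nonneg hab fun t _ => abs_nonneg _
  have hqneg_nonneg : 0 ≤ ∫ t in a..b, (q t)⁻ :=
    intervalIntegral.integral_nonneg hab fun t _ => negPart_nonneg _
  have hα_nonneg : 0 ≤ α := hα.trans' (by positivity)
  have hδ_nonneg : 0 ≤ δ := hδ.trans' (by positivity)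
  obtain ⟨x₀, hx₀, hmax⟩ := isCompact_Icc.exists_isMaxOn (Set.nonempty_Icc.2 hab)
    (h.isPrimitiveOn.continuousOn.mono Set.Icc_subset_uIcc).norm
  have hcauchySchwarz : ∫ t in a..b, ‖φ t‖ * ‖k t * u t‖ ≤ N * D :=
    h.integral_norm_mul_norm_deriv_le hab hk hk_nonneg
  have henergy : D ≤ √α * ‖φ x₀‖ := by
    rw [← Real.sqrt_sq (norm_nonneg (φ x₀)), ← Real.sqrt_mul hα_nonneg]
    refine Real.sqrt_le_sqrt ?_
    grw [h.energy_le_mul_sq hab hk hq hw hua hub hneutral hmax, hα]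
  have hsup_sq : ‖φ x₀‖ * ‖φ x₀‖ ≤ √α * δ * N * ‖φ x₀‖ :=
    calc ‖φ x₀‖ * ‖φ x₀‖
        ≤ 2 * (∫ t in a..b, |w t|) / |∫ t in a..b, w t| *
            ∫ t in a..b, ‖φ t‖ * ‖k t * u t‖ := by
          rw [div_mul_eq_mul_div, le_div_iff₀ hw_pos, ← sq]
          linarith [h.sq_norm_mul_abs_integral_weight_le hab hw hneutral hx₀]
      _ ≤ δ * (N * (√α * ‖φ x₀‖)) := by
          grw [hcauchySchwarz, hδ, henergy]
      _ = √α * δ * N * ‖φ x₀‖ := by ring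
  have hsup : ‖φ x₀‖ ≤ √α * δ * N := by
    rcases (norm_nonneg (φ x₀)).eq_or_lt with hzero | hpos
    · rw [← hzero]
      positivity
    · exact le_of_mul_le_mul_right hsup_sq hpos
  refine ⟨?_, fun x hx => (hmax hx).trans hsup⟩
  calc D ≤ √α * (√α * δ * N) := by grw [henergy, hsup]
    _ = α * δ * N := by rw [← mul_assoc, ← mul_assoc, Real.mul_self_sqrt hα_nonneg]

end SturmLiouville

/-- Lemma 3.4 of the paper for separated self-adjoint boundary conditions:
if ∫ₐᵇ w ≠ 0, then for a non-real eigenvalue λ with solution (φ, u),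
‖φ'‖_{p,2} ≤ α·δ·‖φ‖_{1/p,2} and ‖φ‖_∞ ≤ √α·δ·‖φ‖_{1/p,2}. -/
theorem eigenfunction_norm_estimates_delta_separated
    (a b : ℝ) (hab : a < b) (p q w : ℝ → ℝ)
    (hpm : Measurable p) (hqm : Measurable q) (hwm : Measurable w)
    (hp_pos : ∀ᵐ x ∂(volume.restrict (Set.Ioc a b)), 0 < p x)
    (hp_int : IntegrableOn (fun x => 1 / p x) (Set.Ioc a b))
    (hq_int : IntegrableOn q (Set.Ioc a b))
    (hw_int : IntegrableOn w (Set.Ioc a b))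
    (hw_ne : ∀ᵐ x ∂(volume.restrict (Set.Ioc a b)), w x ≠ 0)
    (hw0 : (∫ t in a..b, w t) ≠ 0)
    (δ : ℝ) (hδ : δ = 2 + 2 * (∫ t in a..b, |w t|) / |∫ t in a..b, w t|)
    (lam : ℂ) (hlam : lam.im ≠ 0) (φ u : ℝ → ℂ)
    (hφc : ContinuousOn φ (Set.Icc a b)) (huc : ContinuousOn u (Set.Icc a b))
    (hφ : ∀ x ∈ Set.Icc a b, φ x = φ a + ∫ t in a..x, u t / (p t : ℂ))
    (hu : ∀ x ∈ Set.Icc a b, u x = u a + ∫ t in a..x, ((q t : ℂ) - lam * (w t : ℂ)) * φ t)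
    (l r : ℝ) (hbca : u a = (l : ℂ) * φ a) (hbcb : u b = (r : ℂ) * φ b)
    (α : ℝ) (hα : α = |l| + |r| + ∫ t in a..b, |min (q t) 0|) :
    Real.sqrt (∫ t in a..b, ‖u t‖ ^ 2 / p t)
        ≤ α * δ * Real.sqrt (∫ t in a..b, ‖φ t‖ ^ 2 / p t)
      ∧ sSup ((fun x => ‖φ x‖) '' Set.Icc a b)
        ≤ Real.sqrt α * δ * Real.sqrt (∫ t in a..b, ‖φ t‖ ^ 2 / p t) := by
  have hk := (intervalIntegrable_iff_integrableOn_Ioc_of_le hab.le).2 hp_int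
  have hq := (intervalIntegrable_iff_integrableOn_Ioc_of_le hab.le).2 hq_int
  have hw := (intervalIntegrable_iff_integrableOn_Ioc_of_le hab.le).2 hw_int
  have hqneg (t : ℝ) : |min (q t) 0| = (q t)⁻ := by
    rw [abs_of_nonpos (min_le_right _ _), negPart_eq_neg_inf_zero]
  have hα_le : l⁻ + r⁺ + ∫ t in a..b, (q t)⁻ ≤ α := by
    simp_rw [hα, hqneg]
    gcongr
    exacts [sup_le (neg_le_abs l) (abs_nonneg l), sup_le (le_abs_self r) (abs_nonneg r)]
  rw [← Set.uIcc_of_le hab.le] at hφc huc hφ hu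
  have hsol : IsSturmLiouvilleSolution (fun t => 1 / p t) q w lam φ u a b :=
    isSturmLiouvilleSolution_of_eq_add_integral hk hq hw hφc huc
      (by simpa [div_eq_inv_mul] using hφ) hu
  have hbounds := eigenfunction_norm_estimates_delta_separated_general (α := α) (δ := δ) hab.le
    (hp_pos.mono fun t ht => one_div_nonneg.2 ht.le) hk hq hw hw0 hsol hbca hbcb
    (hsol.integral_weight_mul_sq_norm_eq_zero hk hq hw hbca hbcb hlam)
    hα_le (by linarith)
  simp only [one_div_mul_eq_div] at hbounds
  exact hbounds.imp_right fun hsup =>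
    csSup_le ((Set.nonempty_Icc.2 hab.le).image _) (Set.forall_mem_image.2 hsup)
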